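/- arXiv:2101.06726 — 7 statements merged into one kernel-verified Lean document; each statement's English description precedes it below -/
import Mathlib

section
/- For an arbitrary prime power q and any divisor t of q−1, the graph G(q,t) is K_{2,t+1}-free; concretely, any two distinct vertices of G(q,t) have at most t common neighbors. -/
/-- The scaling relation by the subgroup `H ≤ Fˣ` on nonzero pairs of field elements:
`(a₁,b₁) ∼ (a₂,b₂)` iff there is `h ∈ H` with `a₁ = h·a₂` and `b₁ = h·b₂`. -/
def Grel {F : Type} [Field F] (H : Subgroup Fˣ) (p p' : {p : F × F // p ≠ 0}) : Prop :=
  ∃ h ∈ H, p.1.1 = (h : F) * p'.1.1 ∧ p.1.2 = (h : F) * p'.1.2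

/-- The vertex set of the graph `G(q,t)`: nonzero pairs modulo scaling by `H`. -/
def GVertex (F : Type) [Field F] (H : Subgroup Fˣ) : Type :=
  Quot (Grel H)

/-- Membership of a field element in the subgroup `H ≤ Fˣ`. -/
def memH {F : Type} [Field F] (H : Subgroup Fˣ) (x : F) : Prop :=
  ∃ h ∈ H, (h : F) = x

/-- Adjacency in the graph `G(q,t)`: `⟨a,b⟩` and `⟨x,y⟩` are adjacent iff `a·x + b·y ∈ H`
(this condition is independent of the chosen representatives). -/
def GAdj {F : Type} [Field F] (H : Subgroup Fˣ) (u v : GVertex F H) : Prop :=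
  ∃ p p' : {p : F × F // p ≠ 0},
    u = Quot.mk (Grel H) p ∧ v = Quot.mk (Grel H) p' ∧
      memH H (p.1.1 * p'.1.1 + p.1.2 * p'.1.2)

/-! Everything rests on the identity `(p ⬝ u) v - (p ⬝ v) u = (u × v) Jp` in the plane, where `J` is
the quarter turn and `u × v = Ju ⬝ v`. Suppose `p` represents a common neighbor of `⟨u⟩` and `⟨v⟩`,
so that `p ⬝ u` and `p ⬝ v` lie in `H`. If `u × v` were zero, the identity would make `v` an
`H`-multiple of `u`, and the two vertices would coincide. Hence `u × v ≠ 0`, and the identity shows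
that `p` is determined by the pair `(p ⬝ u, p ⬝ v)`. Scaling `p` to achieve `p ⬝ u = 1` leaves at
most one common neighbor for each value of `p ⬝ v` in `H`. -/

section Plane

variable {R : Type*} [CommRing R]

/-- The standard symmetric bilinear form on the plane `R × R`, whose values on representatives
decide adjacency; `dotProduct` itself applies to functions, not to pairs. -/
def planeDot (p q : R × R) : R :=
  p.1 * q.1 + p.2 * q.2

/-- The rotation of the plane `R × R` by a right angle. The determinant of `u` and `v` is expressed
as `planeDot (quarterTurn u) v`. -/
def quarterTurn (p : R × R) : R × R :=
  (-p.2, p.1)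

theorem planeDot_smul_left {M : Type*} [DistribSMul M R] [IsScalarTower M R R]
    (c : M) (p q : R × R) : planeDot (c • p) q = c • planeDot p q := by
  simp only [planeDot, Prod.smul_fst, Prod.smul_snd, smul_mul_assoc, smul_add]

theorem planeDot_smul_right {M : Type*} [DistribSMul M R] [SMulCommClass M R R]
    (c : M) (p q : R × R) : planeDot p (c • q) = c • planeDot p q := by
  simp only [planeDot, Prod.smul_fst, Prod.smul_snd, mul_smul_comm, smul_add]

theorem quarterTurn_injective : Function.Injective (quarterTurn : R × R → R × R) := by
  rintro ⟨a, b⟩ ⟨c, d⟩ h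
  obtain ⟨hbd, hac⟩ := Prod.mk.inj h
  exact Prod.ext hac (neg_injective hbd)

theorem planeDot_smul_sub_planeDot_smul (p u v : R × R) :
    planeDot p u • v - planeDot p v • u = planeDot (quarterTurn u) v • quarterTurn p := by
  ext
  · simp only [planeDot, quarterTurn, Prod.fst_sub, Prod.smul_fst, smul_eq_mul]
    ring
  · simp only [planeDot, quarterTurn, Prod.snd_sub, Prod.smul_snd, smul_eq_mul]
    ring

theorem eq_of_planeDot_eq {p p' u v : R × R}
    (huv : IsLeftRegular (planeDot (quarterTurn u) v)) (hu : planeDot p u = planeDot p' u)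
    (hv : planeDot p v = planeDot p' v) : p = p' := by
  have hsmul : planeDot (quarterTurn u) v • quarterTurn p =
      planeDot (quarterTurn u) v • quarterTurn p' := by
    simp only [← planeDot_smul_sub_planeDot_smul, hu, hv]
  obtain ⟨hfst, hsnd⟩ := Prod.mk.inj hsmul
  exact quarterTurn_injective (Prod.ext (huv hfst) (huv hsnd))

end Plane

section Graph

variable {F : Type} [Field F] {H : Subgroup Fˣ}

theorem memH_smul_iff {h : Fˣ} (hh : h ∈ H) {x : F} : memH H (h • x) ↔ memH H x := by
  constructor
  · rintro ⟨k, hk, hkx⟩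
    exact ⟨h⁻¹ * k, H.mul_mem (H.inv_mem hh) hk, by simp [hkx, Units.smul_def]⟩
  · rintro ⟨k, hk, rfl⟩
    exact ⟨h * k, H.mul_mem hh hk, Units.val_mul h k⟩

theorem encard_setOf_memH (H : Subgroup Fˣ) : {x : F | memH H x}.encard = ENat.card H :=
  Units.val_injective.encard_image (H : Set Fˣ)

theorem Grel_iff_exists_eq_smul {p p' : {p : F × F // p ≠ 0}} :
    Grel H p p' ↔ ∃ h ∈ H, (p : F × F) = h • (p' : F × F) := by
  simp only [Grel, Prod.ext_iff, Prod.smul_fst, Prod.smul_snd, Units.smul_def, smul_eq_mul]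

theorem Grel_iff_orbitRel {p p' : {p : F × F // p ≠ 0}} :
    Grel H p p' ↔ MulAction.orbitRel H (F × F) p p' := by
  simp only [Grel_iff_exists_eq_smul, MulAction.orbitRel_apply, MulAction.mem_orbit_iff,
    Subtype.exists, Subgroup.mk_smul, exists_prop, eq_comm]

theorem equivalence_Grel (H : Subgroup Fˣ) : Equivalence (Grel H) where
  refl p := Grel_iff_orbitRel.2 (Setoid.refl' _ (p : F × F))
  symm h := Grel_iff_orbitRel.2 (Setoid.symm' _ (Grel_iff_orbitRel.1 h))
  trans h h' := Grel_iff_orbitRel.2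
    (Setoid.trans' _ (Grel_iff_orbitRel.1 h) (Grel_iff_orbitRel.1 h'))

theorem mk_Grel_eq_mk_iff {p p' : {p : F × F // p ≠ 0}} :
    Quot.mk (Grel H) p = Quot.mk (Grel H) p' ↔ ∃ h ∈ H, (p : F × F) = h • (p' : F × F) := by
  rw [(equivalence_Grel H).quot_mk_eq_iff, Grel_iff_exists_eq_smul]

theorem GAdj_mk_iff {p u : {p : F × F // p ≠ 0}} :
    GAdj H (Quot.mk (Grel H) p) (Quot.mk (Grel H) u) ↔ memH H (planeDot (p : F × F) u) := by
  refine ⟨?_, fun h ↦ ⟨p, u, rfl, rfl, h⟩⟩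
  rintro ⟨p', u', hp, hu, hadj⟩
  obtain ⟨h, hh, hp⟩ := mk_Grel_eq_mk_iff.1 hp
  obtain ⟨k, hk, hu⟩ := mk_Grel_eq_mk_iff.1 hu
  rw [hp, hu, planeDot_smul_left, planeDot_smul_right, memH_smul_iff hh, memH_smul_iff hk]
  exact hadj

theorem exists_rep_planeDot_eq_one {w : GVertex F H} {u : {p : F × F // p ≠ 0}}
    (hw : GAdj H w (Quot.mk (Grel H) u)) :
    ∃ p : {p : F × F // p ≠ 0}, Quot.mk (Grel H) p = w ∧ planeDot (p : F × F) u = 1 := by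
  induction w using Quot.ind with
  | mk r =>
    obtain ⟨h, hh, hru⟩ := GAdj_mk_iff.1 hw
    refine ⟨⟨h⁻¹ • (r : F × F), (smul_ne_zero_iff_ne _).2 r.2⟩,
      mk_Grel_eq_mk_iff.2 ⟨h⁻¹, H.inv_mem hh, rfl⟩, ?_⟩
    rw [planeDot_smul_left, ← hru, Units.smul_def, smul_eq_mul, Units.inv_mul]

theorem planeDot_quarterTurn_ne_zero {p : F × F} {u v : {p : F × F // p ≠ 0}}
    (huv : Quot.mk (Grel H) u ≠ Quot.mk (Grel H) v)
    (hu : memH H (planeDot p u)) (hv : memH H (planeDot p v)) :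
    planeDot (quarterTurn (u : F × F)) v ≠ 0 := by
  intro hdet
  obtain ⟨h, hh, hpu⟩ := hu
  obtain ⟨k, hk, hpv⟩ := hv
  have hsmul : h • (v : F × F) = k • (u : F × F) := by
    have hplane := planeDot_smul_sub_planeDot_smul p (u : F × F) v
    rwa [hdet, zero_smul, sub_eq_zero, ← hpu, ← hpv] at hplane
  refine huv (mk_Grel_eq_mk_iff.2 ⟨k⁻¹ * h, H.mul_mem (H.inv_mem hk) hh, ?_⟩)
  rw [mul_smul, hsmul, inv_smul_smul]

theorem encard_setOf_planeDot_eq_one_le (H : Subgroup Fˣ) {u v : F × F}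
    (huv : planeDot (quarterTurn u) v ≠ 0) :
    {p : {p : F × F // p ≠ 0} |
      planeDot (p : F × F) u = 1 ∧ memH H (planeDot (p : F × F) v)}.encard ≤ ENat.card H := by
  rw [← encard_setOf_memH]
  refine Set.encard_le_encard_of_injOn (f := fun p ↦ planeDot (p : F × F) v) (fun p hp ↦ hp.2) ?_
  intro p hp p' hp' hv
  exact Subtype.ext (eq_of_planeDot_eq (IsRegular.of_ne_zero huv).left (hp.1.trans hp'.1.symm) hv)

theorem G_qt_K2_t1_free_general (H : Subgroup Fˣ) {u₁ u₂ : GVertex F H} (hne : u₁ ≠ u₂) :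
    {w : GVertex F H | GAdj H w u₁ ∧ GAdj H w u₂}.encard ≤ ENat.card H := by
  obtain ⟨u, rfl⟩ := Quot.exists_rep u₁
  obtain ⟨v, rfl⟩ := Quot.exists_rep u₂
  set P := {p : {p : F × F // p ≠ 0} |
    planeDot (p : F × F) u = 1 ∧ memH H (planeDot (p : F × F) v)}
  have hsub : {w | GAdj H w (Quot.mk _ u) ∧ GAdj H w (Quot.mk _ v)} ⊆ Quot.mk (Grel H) '' P := by
    rintro w ⟨hwu, hwv⟩
    obtain ⟨p, rfl, hpu⟩ := exists_rep_planeDot_eq_one hwu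
    exact ⟨p, ⟨hpu, GAdj_mk_iff.1 hwv⟩, rfl⟩
  refine (Set.encard_le_encard hsub).trans ((Set.encard_image_le _ P).trans ?_)
  obtain hP | ⟨p, hpu, hpv⟩ := P.eq_empty_or_nonempty
  · simp [hP]
  · have hpu' : memH H (planeDot (p : F × F) u) := ⟨1, H.one_mem, by simp [hpu]⟩
    exact encard_setOf_planeDot_eq_one_le H (planeDot_quarterTurn_ne_zero hne hpu' hpv)

end Graph

/-- For an arbitrary prime power `q` and `t ∣ q−1`, the graph `G(q,t)` is `K_{2,t+1}`-free:
any two distinct vertices have at most `t` common neighbors. -/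
theorem G_qt_K2_t1_free {q t : ℕ} (hq : IsPrimePow q) (ht : t ∣ q - 1)
    {F : Type} [Field F] [Fintype F] (hF : Fintype.card F = q)
    (H : Subgroup Fˣ) (hH : Nat.card H = t)
    (u₁ u₂ : GVertex F H) (hne : u₁ ≠ u₂) :
    {w : GVertex F H | GAdj H w u₁ ∧ GAdj H w u₂}.ncard ≤ t := by
  subst hH
  exact ENat.toNat_le_toNat (G_qt_K2_t1_free_general H hne) ENat.card_lt_top_of_finite.ne
end

section
/- For an arbitrary prime power q and any divisor t of q−1, the graph G(q,t) has at least (1/(2t))·(q²−1)·(q−1) edges. -/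
/-- The edge set of the graph `G(q,t)`: unordered pairs of distinct adjacent vertices. -/
def GEdges (F : Type) [Field F] (H : Subgroup Fˣ) : Set (Sym2 (GVertex F H)) :=
  {e | ∃ u v : GVertex F H, e = s(u, v) ∧ u ≠ v ∧ GAdj H u v}

/-!
A vertex `v = ⟨a, b⟩` is adjacent to every class meeting the line `a * x + b * y = 1`. This line has
`q` points, and they lie in distinct classes: `h ∈ H` maps a point of the line to a point of the
line only if `h = 1`. At most one of these `q` classes is `v` itself, so `v` has degree at least
`q - 1`. As `H` acts freely on nonzero pairs there are `(q² - 1) / t` vertices, and the bound is the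
degree-sum formula.
-/

theorem card_mul_le_two_mul_ncard_edgeSet {V : Type*} [Finite V] (G : SimpleGraph V) {d : ℕ}
    (hd : ∀ v, d ≤ (G.neighborSet v).ncard) : Nat.card V * d ≤ 2 * G.edgeSet.ncard := by
  classical
  have := Fintype.ofFinite V
  calc Nat.card V * d = ∑ _v : V, d := by simp
    _ ≤ ∑ v, G.degree v := Finset.sum_le_sum fun v _ ↦ by
      rw [← G.card_neighborSet_eq_degree, Set.fintypeCard_eq_ncard]
      exact hd v
    _ = 2 * G.edgeSet.ncard := by
      rw [G.sum_degrees_eq_twice_card_edges, ← G.coe_edgeFinset, Set.ncard_coe_finset]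

theorem card_quotient_orbitRel_nonzero_mul_card (R M : Type*) [Ring R] [IsDomain R]
    [AddCommGroup M] [Module R M] [Module.IsTorsionFree R M] [Finite M] (H : Subgroup Rˣ) :
    Nat.card (Quotient (MulAction.orbitRel H {x : M // x ≠ 0})) * Nat.card H = Nat.card M - 1 := by
  have free (x : {x : M // x ≠ 0}) : MulAction.stabilizer H x = ⊥ := by
    refine (Subgroup.eq_bot_iff_forall _).2 fun h hx ↦ Subtype.ext ?_
    have h_mem : (h : Rˣ) ∈ MulAction.stabilizer Rˣ (x : M) := congrArg Subtype.val hx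
    rwa [Module.stabilizer_units_eq_bot_of_ne_zero R x.2, Subgroup.mem_bot] at h_mem
  rw [← Nat.card_prod, ← Nat.card_congr (MulAction.selfEquivOrbitsQuotientProd free),
    ← Set.ncard_singleton (0 : M), ← Set.ncard_compl]
  rfl

theorem exists_injective_forall_dot_eq_one {R : Type*} [CommRing R] {a b : R}
    (hab : IsCoprime a b) :
    ∃ g : R → R × R, Function.Injective g ∧ ∀ s, a * (g s).1 + b * (g s).2 = 1 := by
  obtain ⟨u, v, huv⟩ := hab
  refine ⟨fun s ↦ (u - s * b, v + s * a), fun s s' h ↦ ?_, fun s ↦ ?_⟩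
  · obtain ⟨hb, ha⟩ := Prod.mk.inj h
    linear_combination (s' - s) * huv + u * ha - v * hb
  · linear_combination huv

section

variable {F : Type} [Field F] {H : Subgroup Fˣ}

theorem Grel_eq_orbitRel (H : Subgroup Fˣ) :
    Grel H = (MulAction.orbitRel H {p : F × F // p ≠ 0}).r := by
  ext p p'
  constructor
  · rintro ⟨h, hh, h₁, h₂⟩
    exact ⟨⟨h, hh⟩, Subtype.ext (Prod.ext h₁.symm h₂.symm)⟩
  · rintro ⟨h, rfl⟩
    exact ⟨h, h.2, rfl, rfl⟩

theorem Grel.equivalence (H : Subgroup Fˣ) : Equivalence (Grel H) :=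
  Grel_eq_orbitRel H ▸ (MulAction.orbitRel H {p : F × F // p ≠ 0}).iseqv

theorem Grel.eq_of_dot_eq_one {a b : F} {x y : {p : F × F // p ≠ 0}} (hxy : Grel H x y)
    (hx : a * x.1.1 + b * x.1.2 = 1) (hy : a * y.1.1 + b * y.1.2 = 1) : x = y := by
  obtain ⟨h, -, h₁, h₂⟩ := hxy
  have h_one : (h : F) = 1 := by
    rw [h₁, h₂] at hx
    linear_combination hx - (h : F) * hy
  rw [h_one, one_mul] at h₁ h₂
  exact Subtype.ext (Prod.ext h₁ h₂)

instance GVertex.finite [Finite F] : Finite (GVertex F H) :=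
  inferInstanceAs (Finite (Quot (Grel H)))

theorem card_GVertex_mul_card [Finite F] (H : Subgroup Fˣ) :
    Nat.card (GVertex F H) * Nat.card H = Nat.card F ^ 2 - 1 := by
  rw [GVertex, Grel_eq_orbitRel, sq, ← Nat.card_prod F F]
  exact card_quotient_orbitRel_nonzero_mul_card F (F × F) H

theorem GAdj.symm {u v : GVertex F H} : GAdj H u v → GAdj H v u := by
  rintro ⟨p, p', hu, hv, h⟩
  exact ⟨p', p, hv, hu, by simpa only [mul_comm] using h⟩

/-- The graph `G(q,t)` as a simple graph, so that the degree-sum formula applies to it. The loops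
of the relation `GAdj` are removed. -/
def GGraph (F : Type) [Field F] (H : Subgroup Fˣ) : SimpleGraph (GVertex F H) where
  Adj u v := u ≠ v ∧ GAdj H u v
  symm := ⟨fun _ _ h ↦ ⟨h.1.symm, h.2.symm⟩⟩
  loopless := ⟨fun _ h ↦ h.1 rfl⟩

theorem edgeSet_GGraph (H : Subgroup Fˣ) : (GGraph F H).edgeSet = GEdges F H := by
  ext e
  constructor
  · induction e using Sym2.ind with
    | _ u v => exact fun h ↦ ⟨u, v, rfl, h⟩
  · rintro ⟨u, v, rfl, h⟩
    exact h

theorem exists_injective_forall_GAdj (v : GVertex F H) :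
    ∃ φ : F → GVertex F H, Function.Injective φ ∧ ∀ s, GAdj H v (φ s) := by
  obtain ⟨⟨⟨a, b⟩, hab⟩, rfl⟩ := Quot.exists_rep v
  have hcoprime : IsCoprime a b := by
    rw [Semifield.isCoprime_iff]
    contrapose! hab
    exact Prod.ext hab.1 hab.2
  obtain ⟨g, g_inj, hg⟩ := exists_injective_forall_dot_eq_one hcoprime
  have g_ne_zero (s : F) : g s ≠ 0 := fun h ↦ by simpa [h] using hg s
  refine ⟨fun s ↦ Quot.mk _ ⟨g s, g_ne_zero s⟩, fun s s' h ↦ ?_, fun s ↦ ?_⟩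
  · have hrel := ((Grel.equivalence H).quot_mk_eq_iff _ _).1 h
    exact g_inj (congrArg Subtype.val (hrel.eq_of_dot_eq_one (hg s) (hg s')))
  · exact ⟨_, _, rfl, rfl, 1, H.one_mem, (hg s).symm⟩

theorem card_sub_one_le_ncard_neighborSet [Finite F] (v : GVertex F H) :
    Nat.card F - 1 ≤ ((GGraph F H).neighborSet v).ncard := by
  obtain ⟨φ, φ_inj, hφ⟩ := exists_injective_forall_GAdj v
  calc Nat.card F - 1 = (Set.range φ).ncard - 1 := by rw [Set.ncard_range_of_injective φ_inj]
    _ ≤ (Set.range φ \ {v}).ncard := Set.pred_ncard_le_ncard_sdiff_singleton _ _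
    _ ≤ ((GGraph F H).neighborSet v).ncard := by
      refine Set.ncard_le_ncard (fun _ hw ↦ ?_) (Set.toFinite _)
      obtain ⟨⟨s, rfl⟩, hne⟩ := hw
      exact ⟨Ne.symm hne, hφ s⟩

end

/-- For an arbitrary prime power `q` and `t ∣ q−1`, the graph `G(q,t)` has at least
`(q²−1)(q−1)/(2t)` edges. -/
theorem GEdges_lower_bound {q t : ℕ} (hq : IsPrimePow q) (ht : t ∣ q - 1)
    {F : Type} [Field F] [Fintype F] (hF : Fintype.card F = q)
    (H : Subgroup Fˣ) (hH : Nat.card H = t) :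
    (q ^ 2 - 1) * (q - 1) ≤ 2 * t * (GEdges F H).ncard := by
  subst hF hH
  rw [← Nat.card_eq_fintype_card, ← card_GVertex_mul_card H, ← edgeSet_GGraph]
  calc Nat.card (GVertex F H) * Nat.card H * (Nat.card F - 1)
      = Nat.card H * (Nat.card (GVertex F H) * (Nat.card F - 1)) := by ring
    _ ≤ Nat.card H * (2 * (GGraph F H).edgeSet.ncard) :=
      Nat.mul_le_mul_left _ <|
        card_mul_le_two_mul_ncard_edgeSet _ card_sub_one_le_ncard_neighborSet
    _ = 2 * Nat.card H * (GGraph F H).edgeSet.ncard := by ring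
end

section
/- Let q be a prime power, F a finite field with q² elements, and H the unique subgroup of F* of order q+1. For any nonzero a,b ∈ F, the equation a·x + b·y = 1 has at most two solutions (x,y) with x ∈ H and y ∈ H. -/
/-!
Let `N x = x * σ x` for a ring endomorphism `σ`. If `u + v = 1`, then also `σ u + σ v = 1`, and
multiplying the latter by `u * v` gives `u * v = N u * v + N v * u`. Once `N u` and `N v` are
prescribed, substituting `v = 1 - u` leaves a monic quadratic equation for `u`. For the theorem,
`σ` is the `q`-power Frobenius, `H` consists of elements with `N x = 1`, and `u = a * x`,
`v = b * y` have the prescribed values `N a` and `N b`.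
-/

open Polynomial in
theorem encard_setOf_quadratic_eq_zero_le_two {R : Type*} [CommRing R] [IsDomain R]
    {a : R} (ha : a ≠ 0) (b c : R) : {x : R | a * x ^ 2 + b * x + c = 0}.encard ≤ 2 := by
  let P : R[X] := C a * X ^ 2 + C b * X + C c
  have hdeg : P.natDegree = 2 := natDegree_quadratic ha
  have hP : P ≠ 0 := ne_zero_of_natDegree_gt (hdeg ▸ two_pos)
  have hroots : {x : R | a * x ^ 2 + b * x + c = 0} = P.rootSet R := by
    ext x
    simp [mem_rootSet, hP, P]
  rw [hroots]
  exact Set.encard_le_coe_iff_finite_ncard_le.2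
    ⟨P.rootSet_finite R, (P.ncard_rootSet_le R).trans_eq hdeg⟩

theorem mul_eq_add_of_add_eq_one {R : Type*} [CommSemiring R] (σ : R →+* R) {u v : R}
    (h : u + v = 1) : u * v = u * σ u * v + v * σ v * u :=
  calc
    u * v = u * v * (σ u + σ v) := by rw [← map_add, h, map_one, mul_one]
    _ = u * σ u * v + v * σ v * u := by ring

theorem at_most_two_solutions_general {R : Type*} [CommRing R] [IsDomain R] (σ : R →+* R)
    {a b : R} (ha : a ≠ 0) (hb : b ≠ 0) (α β : R) :
    {p : R × R | p.1 * σ p.1 = α ∧ p.2 * σ p.2 = β ∧ a * p.1 + b * p.2 = 1}.encard ≤ 2 := by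
  set A := a * σ a * α
  set B := b * σ b * β
  refine (Set.encard_le_encard_of_injOn (f := fun p ↦ a * p.1) ?_ ?_).trans
    (encard_setOf_quadratic_eq_zero_le_two one_ne_zero (B - A - 1) A)
  · rintro ⟨x, y⟩ ⟨hx, hy, hxy⟩
    have hA : a * x * σ (a * x) = A := by rw [map_mul, mul_mul_mul_comm, hx]
    have hB : b * y * σ (b * y) = B := by rw [map_mul, mul_mul_mul_comm, hy]
    have hprod : a * x * (b * y) = A * (b * y) + B * (a * x) := by
      rw [mul_eq_add_of_add_eq_one σ hxy, hA, hB]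
    rw [eq_sub_of_add_eq' hxy] at hprod
    change 1 * (a * x) ^ 2 + (B - A - 1) * (a * x) + A = 0
    linear_combination -hprod
  · rintro ⟨x, y⟩ ⟨-, -, hxy⟩ ⟨x', y'⟩ ⟨-, -, hxy'⟩ (hxx' : a * x = a * x')
    have hyy' : b * y = b * y' := by linear_combination hxy - hxy' - hxx'
    exact Prod.ext (mul_left_cancel₀ ha hxx') (mul_left_cancel₀ hb hyy')

theorem exists_ringHom_forall_apply_eq_pow {F : Type*} [Field F] [Fintype F] {q : ℕ}
    (hq : q ∣ Fintype.card F) : ∃ σ : F →+* F, ∀ x, σ x = x ^ q := by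
  obtain ⟨p, _⟩ := CharP.exists F
  obtain ⟨n, hp, hcard⟩ := FiniteField.card F p
  obtain ⟨k, -, rfl⟩ := (Nat.dvd_prime_pow hp).1 (hcard ▸ hq)
  have : Fact p.Prime := ⟨hp⟩
  exact ⟨iterateFrobenius F p k, iterateFrobenius_def p k⟩

theorem exists_ringHom_forall_mem_val_mul_apply_eq_one {F : Type*} [Field F] [Fintype F] {q : ℕ}
    (hq : q ∣ Fintype.card F) {H : Subgroup Fˣ} (hH : Nat.card H = q + 1) :
    ∃ σ : F →+* F, ∀ h ∈ H, (h : F) * σ h = 1 := by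
  obtain ⟨σ, hσ⟩ := exists_ringHom_forall_apply_eq_pow hq
  refine ⟨σ, fun h hh ↦ ?_⟩
  have hpow : h ^ (q + 1) = 1 := orderOf_dvd_iff_pow_eq_one.1 (hH ▸ H.orderOf_dvd_natCard hh)
  rw [hσ, ← pow_succ', ← Units.val_pow_eq_pow_val, hpow, Units.val_one]

/-- Let `F` be a field with `q²` elements and `H` the unique subgroup of `Fˣ` of order
`q+1`. For nonzero `a, b ∈ F`, the equation `a·x + b·y = 1` has at most two solutions
`(x,y)` with `x ∈ H` and `y ∈ H`. -/
theorem at_most_two_solutions {q : ℕ} (hq : IsPrimePow q)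
    {F : Type} [Field F] [Fintype F] (hF : Fintype.card F = q ^ 2)
    (H : Subgroup Fˣ) (hH : Nat.card H = q + 1)
    (a b : F) (ha : a ≠ 0) (hb : b ≠ 0) :
    {p : F × F | (∃ h ∈ H, (h : F) = p.1) ∧ (∃ h ∈ H, (h : F) = p.2) ∧
      a * p.1 + b * p.2 = 1}.ncard ≤ 2 := by
  obtain ⟨σ, hσ⟩ :=
    exists_ringHom_forall_mem_val_mul_apply_eq_one (hF ▸ dvd_pow_self q two_ne_zero) hH
  refine (Set.encard_le_coe_iff_finite_ncard_le.1 <|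
    (Set.encard_le_encard ?_).trans (at_most_two_solutions_general σ ha hb 1 1)).2
  rintro ⟨_, _⟩ ⟨⟨x, hx, rfl⟩, ⟨y, hy, rfl⟩, hxy⟩
  exact ⟨hσ x hx, hσ y hy, hxy⟩
end

section
/- Let q be a prime power, F a finite field with q² elements, H the unique subgroup of F* of order q+1, and a,b ∈ F nonzero. If x ∈ H and y ∈ H satisfy a·x + b·y = 1, then x is a root of the quadratic polynomial a·X² − (a^{q+1} − b^{q+1} + 1)·X + a^q, and y = (1 − a·x)/b. -/
/-!
Raising to the power `q` is a ring endomorphism `σ` of `F` that inverts every element of `H`.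
Applying `σ` to `b * y = 1 - a * x` and multiplying the two equations cancels `y * σ y = 1`, which
leaves `b * σ b = (1 - a * x) * (1 - σ a * σ x)`. Multiplying by `x` and using `x * σ x = 1` turns
this into the quadratic equation for `x`.
-/

section Endomorphism

variable {R : Type*} [CommRing R] (σ : R →+* R) {a b x y : R}

lemma mul_map_eq_one_sub_mul_one_sub (hy : y * σ y = 1) (hxy : a * x + b * y = 1) :
    b * σ b = (1 - a * x) * (1 - σ a * σ x) := by
  have hby : b * y = 1 - a * x := eq_sub_of_add_eq' hxy
  calc
    b * σ b = b * y * σ (b * y) := by rw [map_mul, mul_mul_mul_comm, hy, mul_one]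
    _ = (1 - a * x) * (1 - σ a * σ x) := by rw [hby, map_sub, map_one, map_mul]

lemma quadratic_eq_zero_of_mul_map_eq_one (hx : x * σ x = 1) (hy : y * σ y = 1)
    (hxy : a * x + b * y = 1) :
    a * x ^ 2 - (a * σ a - b * σ b + 1) * x + σ a = 0 := by
  linear_combination x * mul_map_eq_one_sub_mul_one_sub σ hy hxy + (a * x - 1) * σ a * hx

end Endomorphism

lemma pow_card_eq_one_of_mem_units_subgroup {M : Type*} [Monoid M] {H : Subgroup Mˣ} {x : M}
    (hx : ∃ h ∈ H, (h : M) = x) : x ^ Nat.card H = 1 := by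
  obtain ⟨h, hh, rfl⟩ := hx
  exact_mod_cast orderOf_dvd_iff_pow_eq_one.mp (H.orderOf_dvd_natCard hh)

lemma exists_expChar_pow_eq_of_card_eq_pow {R : Type*} [CommRing R] [IsDomain R] [Fintype R]
    {q m : ℕ} (hq : IsPrimePow q) (hR : Fintype.card R = q ^ m) :
    ∃ p k : ℕ, ExpChar R p ∧ p ^ k = q := by
  obtain ⟨p, k, hp, -, rfl⟩ := hq
  have : Fact p.Prime := ⟨hp.nat_prime⟩
  have : CharP R p := charP_of_card_eq_prime_pow (hR.trans (pow_mul p k m).symm)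
  exact ⟨p, k, inferInstance, rfl⟩

theorem solution_is_quadratic_root_general {F : Type*} [Field F] (p k : ℕ) [ExpChar F p]
    {a b x y : F} (hb : b ≠ 0) (hx : x ^ (p ^ k + 1) = 1) (hy : y ^ (p ^ k + 1) = 1)
    (hxy : a * x + b * y = 1) :
    a * x ^ 2 - (a ^ (p ^ k + 1) - b ^ (p ^ k + 1) + 1) * x + a ^ p ^ k = 0 ∧
      y = (1 - a * x) / b := by
  simp only [pow_succ' _ (p ^ k), ← iterateFrobenius_def] at hx hy ⊢
  exact ⟨quadratic_eq_zero_of_mul_map_eq_one _ hx hy hxy,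
    eq_div_of_mul_eq hb (by linear_combination hxy)⟩

/-- Let `F` be a field with `q²` elements and `H` the unique subgroup of `Fˣ` of order
`q+1`. If `x, y ∈ H` satisfy `a·x + b·y = 1` with `a, b ≠ 0`, then `x` is a root of the
quadratic `a·X² − (a^{q+1} − b^{q+1} + 1)·X + a^q` and `y = (1 − a·x)/b`. -/
theorem solution_is_quadratic_root {q : ℕ} (hq : IsPrimePow q)
    {F : Type} [Field F] [Fintype F] (hF : Fintype.card F = q ^ 2)
    (H : Subgroup Fˣ) (hH : Nat.card H = q + 1)
    (a b : F) (ha : a ≠ 0) (hb : b ≠ 0)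
    (x y : F) (hx : ∃ h ∈ H, (h : F) = x) (hy : ∃ h ∈ H, (h : F) = y)
    (hxy : a * x + b * y = 1) :
    a * x ^ 2 - (a ^ (q + 1) - b ^ (q + 1) + 1) * x + a ^ q = 0 ∧
      y = (1 - a * x) / b := by
  obtain ⟨p, k, _, rfl⟩ := exists_expChar_pow_eq_of_card_eq_pow hq hF
  exact solution_is_quadratic_root_general p k hb (hH ▸ pow_card_eq_one_of_mem_units_subgroup hx)
    (hH ▸ pow_card_eq_one_of_mem_units_subgroup hy) hxy
end

section
/- For an arbitrary prime power q, the graph G(q², q+1) is K_{3,3}-free; concretely, any three pairwise distinct vertices of G(q², q+1) have at most two common neighbors. -/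
/-!
Fix vectors `v₁, v₂, v₃` representing the three vertices. A common neighbor `w` makes any two of
them linearly independent, since otherwise the ratio of their pairings with `w` would be a scalar in
`H` carrying one onto the other. So there is a relation `d v₃ = a v₁ + b v₂` with nonzero
coefficients. Conjugation `σ x = x ^ q` satisfies `x * σ x = 1` on `H`, so applying the norm
`x ↦ x * σ x` to `d ⟪w, v₃⟫ = a ⟪w, v₁⟫ + b ⟪w, v₂⟫` yields a quadratic equation in
`z = ⟪w, v₁⟫ / ⟪w, v₂⟫`, whose leading coefficient `a * σ b` is nonzero. It has at most two roots,
and `z` determines the vertex of `w`.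
-/

open Polynomial in
theorem encard_quadratic_zeros_le_two {R : Type*} [CommRing R] [IsDomain R] {a : R} (b c : R)
    (ha : a ≠ 0) : {x : R | a * x ^ 2 + b * x + c = 0}.encard ≤ 2 := by
  let P : R[X] := C a * X ^ 2 + C b * X + C c
  have hP : P.natDegree = 2 := natDegree_quadratic ha
  have hP₀ : P ≠ 0 := ne_zero_of_natDegree_gt (n := 1) (by omega)
  have hzeros : {x : R | a * x ^ 2 + b * x + c = 0} = P.rootSet R := by
    ext x
    simp [P, mem_rootSet_of_ne hP₀]
  rw [hzeros, ← (P.rootSet_finite R).cast_ncard_eq]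
  exact_mod_cast (P.ncard_rootSet_le R).trans_eq hP

theorem exists_ringHom_apply_eq_pow {q k : ℕ} (hq : IsPrimePow q) {R : Type*} [CommRing R]
    [IsDomain R] [Fintype R] (hR : Fintype.card R = q ^ k) : ∃ σ : R →+* R, ∀ x, σ x = x ^ q := by
  obtain ⟨p, n, hp, -, rfl⟩ := hq
  have : Fact p.Prime := ⟨hp.nat_prime⟩
  have : CharP R p := charP_of_card_eq_prime_pow (hR.trans (pow_mul p n k).symm)
  exact ⟨iterateFrobenius R p n, iterateFrobenius_def p n⟩

theorem quadratic_div_eq_zero_of_norm_eq_one {F : Type*} [Field F] {σ : F →+* F}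
    {a b d s t u : F} (hs : s * σ s = 1) (ht : t * σ t = 1) (hu : u * σ u = 1)
    (h : d * u = a * s + b * t) :
    a * σ b * (s / t) ^ 2 + (a * σ a + b * σ b - d * σ d) * (s / t) + b * σ a = 0 := by
  have hdiv : s / t = s * σ t := by
    rw [div_eq_iff (left_ne_zero_of_mul_eq_one ht)]
    linear_combination -s * ht
  have hnorm : d * σ d = (a * s + b * t) * (σ a * σ s + σ b * σ t) := by
    calc d * σ d = d * u * σ (d * u) := by rw [map_mul]; linear_combination -(d * σ d) * hu
      _ = (a * s + b * t) * (σ a * σ s + σ b * σ t) := by rw [h, map_add, map_mul, map_mul]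
  rw [hdiv, hnorm]
  linear_combination -(a * σ a * s * σ t + b * σ a * t * σ t) * hs -
    (b * σ b * s * σ t + b * σ a) * ht

section Pairing

variable {R : Type*} [CommRing R]

/-- The bilinear form `⟪p, r⟫ = p₁ r₁ + p₂ r₂` on `R²`, whose values define adjacency. -/
def pairing (p r : R × R) : R := p.1 * r.1 + p.2 * r.2

/-- The determinant of the `2 × 2` matrix with rows `p` and `r`, which measures their linear
independence. -/
def cross (p r : R × R) : R := p.1 * r.2 - p.2 * r.1

theorem pairing_comm (p r : R × R) : pairing p r = pairing r p := by
  simp only [pairing, mul_comm]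

theorem pairing_smul_eq_of_cross_eq_zero {p r : R × R} (h : cross p r = 0) (w : R × R) :
    pairing w r • p = pairing w p • r := by
  simp only [cross] at h
  ext <;> simp only [pairing, Prod.smul_fst, Prod.smul_snd, smul_eq_mul]
  · linear_combination w.2 * h
  · linear_combination -w.1 * h

theorem cross_mul_cross (p r w w' : R × R) :
    cross p r * cross w w' = pairing w p * pairing w' r - pairing w' p * pairing w r := by
  simp only [cross, pairing]
  ring

theorem cross_mul_pairing (v₁ v₂ v₃ w : R × R) :
    cross v₁ v₂ * pairing w v₃ = cross v₃ v₂ * pairing w v₁ + cross v₁ v₃ * pairing w v₂ := by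
  simp only [cross, pairing]
  ring

end Pairing

section Graph

variable {F : Type} [Field F] {H : Subgroup Fˣ}

namespace memH

variable {x y : F}

theorem ne_zero (hx : memH H x) : x ≠ 0 := by
  obtain ⟨h, -, rfl⟩ := hx
  exact h.ne_zero

theorem mul (hx : memH H x) (hy : memH H y) : memH H (x * y) := by
  obtain ⟨h, hh, rfl⟩ := hx
  obtain ⟨k, hk, rfl⟩ := hy
  exact ⟨h * k, H.mul_mem hh hk, Units.val_mul h k⟩

theorem div (hx : memH H x) (hy : memH H y) : memH H (x / y) := by
  obtain ⟨h, hh, rfl⟩ := hx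
  obtain ⟨k, hk, rfl⟩ := hy
  exact ⟨h / k, H.div_mem hh hk, Units.val_div_eq_div_val h k⟩

theorem pow_natCard_eq_one (hx : memH H x) : x ^ Nat.card H = 1 := by
  obtain ⟨h, hh, rfl⟩ := hx
  have hpow : h ^ Nat.card H = 1 := congrArg Subtype.val (pow_card_eq_one' (x := (⟨h, hh⟩ : H)))
  rw [← Units.val_pow_eq_pow_val, hpow, Units.val_one]

end memH

namespace Grel

theorem equivalence_s7 (H : Subgroup Fˣ) : Equivalence (Grel H) where
  refl _ := ⟨1, H.one_mem, by simp, by simp⟩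
  symm := by
    rintro p r ⟨h, hh, h₁, h₂⟩
    exact ⟨h⁻¹, H.inv_mem hh, by simp [h₁], by simp [h₂]⟩
  trans := by
    rintro p r s ⟨h, hh, h₁, h₂⟩ ⟨k, hk, k₁, k₂⟩
    exact ⟨h * k, H.mul_mem hh hk, by simp [h₁, k₁, mul_assoc], by simp [h₂, k₂, mul_assoc]⟩

theorem of_smul_eq_smul {p r : {p : F × F // p ≠ 0}} {s t : F} (hs : memH H s) (ht : memH H t)
    (h : t • p.1 = s • r.1) : Grel H p r := by
  obtain ⟨c, hc, hcst⟩ := hs.div ht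
  have hp : p.1 = (c : F) • r.1 := by
    rw [hcst, div_eq_inv_mul, mul_smul, ← h, inv_smul_smul₀ ht.ne_zero]
  exact ⟨c, hc, congrArg Prod.fst hp, congrArg Prod.snd hp⟩

end Grel

namespace GVertex

/-- The vertex `⟨a, b⟩` represented by a nonzero pair `(a, b)`. -/
def mk (H : Subgroup Fˣ) (p : {p : F × F // p ≠ 0}) : GVertex F H := Quot.mk (Grel H) p

theorem exists_mk_eq (v : GVertex F H) : ∃ p, mk H p = v := Quot.exists_rep v

theorem mk_eq_mk_iff {p r : {p : F × F // p ≠ 0}} : mk H p = mk H r ↔ Grel H p r :=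
  (Grel.equivalence_s7 H).quot_mk_eq_iff p r

theorem mk_eq_mk_of_cross_eq_zero {p r : {p : F × F // p ≠ 0}} {w : F × F}
    (hp : memH H (pairing w p)) (hr : memH H (pairing w r)) (h : cross p.1 r.1 = 0) :
    mk H p = mk H r :=
  mk_eq_mk_iff.2 (.of_smul_eq_smul hp hr (pairing_smul_eq_of_cross_eq_zero h w))

theorem adj_mk_mk_iff {p r : {p : F × F // p ≠ 0}} :
    GAdj H (mk H p) (mk H r) ↔ memH H (pairing p.1 r.1) := by
  refine ⟨?_, fun h => ⟨p, r, rfl, rfl, h⟩⟩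
  rintro ⟨p', r', hp, hr, h⟩
  obtain ⟨c, hc, hp₁, hp₂⟩ := mk_eq_mk_iff.1 hp
  obtain ⟨k, hk, hr₁, hr₂⟩ := mk_eq_mk_iff.1 hr
  have hscale : pairing p.1 r.1 = c * k * pairing p'.1 r'.1 := by
    simp only [pairing, hp₁, hp₂, hr₁, hr₂]
    ring
  rw [hscale]
  exact (memH.mul ⟨c, hc, rfl⟩ ⟨k, hk, rfl⟩).mul h

theorem cross_ne_zero {p r : {p : F × F // p ≠ 0}} {w : GVertex F H} (hne : mk H p ≠ mk H r)
    (hp : GAdj H w (mk H p)) (hr : GAdj H w (mk H r)) : cross p.1 r.1 ≠ 0 := by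
  obtain ⟨w, rfl⟩ := exists_mk_eq w
  exact fun h => hne (mk_eq_mk_of_cross_eq_zero (adj_mk_mk_iff.1 hp) (adj_mk_mk_iff.1 hr) h)

/-- The coordinate `⟪w, p⟫ / ⟪w, r⟫` of a vertex `w`, which does not depend on the representative.
It is only meaningful when `⟪w, r⟫ ≠ 0`, in particular when `w` is adjacent to the vertex of `r`. -/
def ratio (p r : F × F) : GVertex F H → F :=
  Quot.lift (fun w => pairing w.1 p / pairing w.1 r) (by
    rintro w w' ⟨h, -, h₁, h₂⟩
    have hscale (v : F × F) : pairing w.1 v = h * pairing w'.1 v := by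
      simp only [pairing, h₁, h₂]
      ring
    simp only [hscale, mul_div_mul_left _ _ h.ne_zero])

theorem ratio_mk (p r : F × F) (w : {p : F × F // p ≠ 0}) :
    ratio p r (mk H w) = pairing w.1 p / pairing w.1 r :=
  rfl

theorem injOn_ratio {p : F × F} {r : {p : F × F // p ≠ 0}} (h : cross p r.1 ≠ 0) :
    Set.InjOn (ratio p r.1) {w : GVertex F H | GAdj H w (mk H r)} := by
  intro w hw w' hw' heq
  obtain ⟨w, rfl⟩ := exists_mk_eq w
  obtain ⟨w', rfl⟩ := exists_mk_eq w'
  rw [Set.mem_ofPred_eq, adj_mk_mk_iff] at hw hw'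
  rw [ratio_mk, ratio_mk, div_eq_div_iff hw.ne_zero hw'.ne_zero, ← sub_eq_zero,
    ← cross_mul_cross] at heq
  rw [pairing_comm] at hw hw'
  exact mk_eq_mk_of_cross_eq_zero hw hw' ((mul_eq_zero_iff_left h).1 heq)

theorem mapsTo_ratio {σ : F →+* F} (hσ : ∀ x, memH H x → x * σ x = 1)
    (v₁ v₂ v₃ : {p : F × F // p ≠ 0}) :
    letI a := cross v₃.1 v₂.1
    letI b := cross v₁.1 v₃.1
    letI d := cross v₁.1 v₂.1
    Set.MapsTo (ratio v₁.1 v₂.1)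
      {w : GVertex F H | GAdj H w (mk H v₁) ∧ GAdj H w (mk H v₂) ∧ GAdj H w (mk H v₃)}
      {z | a * σ b * z ^ 2 + (a * σ a + b * σ b - d * σ d) * z + b * σ a = 0} := by
  rintro w ⟨h₁, h₂, h₃⟩
  obtain ⟨w, rfl⟩ := exists_mk_eq w
  rw [adj_mk_mk_iff] at h₁ h₂ h₃
  exact quadratic_div_eq_zero_of_norm_eq_one (hσ _ h₁) (hσ _ h₂) (hσ _ h₃)
    (cross_mul_pairing v₁.1 v₂.1 v₃.1 w.1)

end GVertex

end Graph

theorem G_q2_K33_free_general {F : Type} [Field F] (σ : F →+* F) (H : Subgroup Fˣ)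
    (hσ : ∀ x, memH H x → x * σ x = 1)
    (v₁ v₂ v₃ : GVertex F H) (h₁₂ : v₁ ≠ v₂) (h₁₃ : v₁ ≠ v₃) (h₂₃ : v₂ ≠ v₃) :
    {w : GVertex F H | GAdj H w v₁ ∧ GAdj H w v₂ ∧ GAdj H w v₃}.encard ≤ 2 := by
  obtain ⟨v₁, rfl⟩ := v₁.exists_mk_eq
  obtain ⟨v₂, rfl⟩ := v₂.exists_mk_eq
  obtain ⟨v₃, rfl⟩ := v₃.exists_mk_eq
  obtain hempty | ⟨w, hw₁, hw₂, hw₃⟩ := Set.eq_empty_or_nonempty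
    {w | GAdj H w (.mk H v₁) ∧ GAdj H w (.mk H v₂) ∧ GAdj H w (.mk H v₃)}
  · simp [hempty]
  have hcross₁₂ := GVertex.cross_ne_zero h₁₂ hw₁ hw₂
  have hcross₁₃ := GVertex.cross_ne_zero h₁₃ hw₁ hw₃
  have hcross₃₂ := GVertex.cross_ne_zero h₂₃.symm hw₃ hw₂
  have hlead : cross v₃.1 v₂.1 * σ (cross v₁.1 v₃.1) ≠ 0 :=
    mul_ne_zero hcross₃₂ ((map_ne_zero σ).2 hcross₁₃)
  exact (Set.encard_le_encard_of_injOn (GVertex.mapsTo_ratio hσ v₁ v₂ v₃)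
    ((GVertex.injOn_ratio hcross₁₂).mono fun _ h => h.2.1)).trans
    (encard_quadratic_zeros_le_two _ _ hlead)

/-- For an arbitrary prime power `q`, the graph `G(q², q+1)` is `K_{3,3}`-free:
any three pairwise distinct vertices have at most two common neighbors. -/
theorem G_q2_K33_free {q : ℕ} (hq : IsPrimePow q)
    {F : Type} [Field F] [Fintype F] (hF : Fintype.card F = q ^ 2)
    (H : Subgroup Fˣ) (hH : Nat.card H = q + 1)
    (v₁ v₂ v₃ : GVertex F H) (h₁₂ : v₁ ≠ v₂) (h₁₃ : v₁ ≠ v₃) (h₂₃ : v₂ ≠ v₃) :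
    {w : GVertex F H | GAdj H w v₁ ∧ GAdj H w v₂ ∧ GAdj H w v₃}.ncard ≤ 2 := by
  obtain ⟨σ, hσ⟩ := exists_ringHom_apply_eq_pow hq hF
  exact ENat.toNat_le_of_le_natCast (G_q2_K33_free_general σ H
    (fun x hx => by rw [hσ, ← pow_succ', ← hH, hx.pow_natCard_eq_one]) v₁ v₂ v₃ h₁₂ h₁₃ h₂₃)
end

section
/- Let q be a prime power, t a divisor of q−1, F a finite field with q² elements, and H the unique subgroup of F* of order t(q+1). For any nonzero α,β ∈ F, the number of pairs (r,s) with r ∈ H, s ∈ H and α·r + β·s = 1 is at most 2t². -/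
/-!
Let `σ` be the ring endomorphism `z ↦ z ^ q` and `N z = z * σ z`. If `N z = a` and `N (1 - z) = b`,
then `σ z = 1 + a - b - z` because `σ` is additive, and multiplying by `z` gives
`z ^ 2 - (1 + a - b) * z + a = 0`: as for two circles in the complex plane, where `σ` is
conjugation, there are at most two such `z`. A solution `(r, s)` is determined by `z = α * r`.
Since `N r` and `N s` are `t`-th roots of unity, `N z = N α * N r` and
`N (1 - z) = N β * N s` take at most `t` values each.
-/

open Polynomial

section Domain

variable {R : Type*} [CommRing R]

/-- The quadratic whose roots include every `z` with `z * σ z = a` and `(1 - z) * σ (1 - z) = b`,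
whatever the ring endomorphism `σ`. -/
noncomputable def normQuadratic (a b : R) : R[X] :=
  X ^ 2 - C (1 + a - b) * X + C a

theorem monic_normQuadratic (a b : R) : (normQuadratic a b).Monic := by
  unfold normQuadratic
  monicity!

theorem natDegree_normQuadratic_le (a b : R) : (normQuadratic a b).natDegree ≤ 2 := by
  unfold normQuadratic
  compute_degree

theorem isRoot_normQuadratic (σ : R →+* R) (z : R) :
    (normQuadratic (z * σ z) ((1 - z) * σ (1 - z))).IsRoot z := by
  simp only [normQuadratic, IsRoot.def, eval_add, eval_sub, eval_mul, eval_pow, eval_X, eval_C,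
    map_sub, map_one]
  ring

variable [IsDomain R]

theorem encard_setOf_mul_map_mem_le (σ : R →+* R) (A B : Finset R) :
    {z : R | z * σ z ∈ A ∧ (1 - z) * σ (1 - z) ∈ B}.encard ≤ (2 * (A.card * B.card) : ℕ) := by
  classical
  let Z : Finset R := (A ×ˢ B).biUnion fun c ↦ (normQuadratic c.1 c.2).roots.toFinset
  have hZ : Z.card ≤ 2 * (A.card * B.card) := by
    rw [mul_comm, ← Finset.card_product]
    exact Finset.card_biUnion_le_card_mul _ _ _ fun c _ ↦
      (Multiset.toFinset_card_le _).trans <|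
        (card_roots' _).trans (natDegree_normQuadratic_le c.1 c.2)
  have hsub : {z : R | z * σ z ∈ A ∧ (1 - z) * σ (1 - z) ∈ B} ⊆ Z := fun z hz ↦
    Finset.mem_biUnion.2 ⟨(_, _), Finset.mk_mem_product hz.1 hz.2, Multiset.mem_toFinset.2 <|
      (mem_roots (monic_normQuadratic _ _).ne_zero).2 (isRoot_normQuadratic σ z)⟩
  calc _ ≤ (Z : Set R).encard := Set.encard_le_encard hsub
    _ = Z.card := Set.encard_coe_eq_coe_finsetCard Z
    _ ≤ _ := by exact_mod_cast hZ

theorem injOn_mul_fst_of_linear_eq {α β : R} (hα : α ≠ 0) (hβ : β ≠ 0) (c : R) :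
    Set.InjOn (fun p : R × R ↦ α * p.1) {p | α * p.1 + β * p.2 = c} := by
  rintro ⟨x, y⟩ (h : α * x + β * y = c) ⟨x', y'⟩ (h' : α * x' + β * y' = c) (hx : α * x = α * x')
  have hy : β * y = β * y' := by linear_combination h - h' - hx
  exact Prod.ext (mul_left_cancel₀ hα hx) (mul_left_cancel₀ hβ hy)

theorem exists_finset_mul_map_mem (σ : R →+* R) (c : R) {n : ℕ} (hn : n ≠ 0) :
    ∃ A : Finset R, A.card ≤ n ∧ ∀ r : R, (r * σ r) ^ n = 1 → c * r * σ (c * r) ∈ A := by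
  classical
  refine ⟨(nthRoots n (1 : R)).toFinset.image (c * σ c * ·), ?_, fun r hr ↦ ?_⟩
  · exact Finset.card_image_le.trans <| (Multiset.toFinset_card_le _).trans (card_nthRoots n 1)
  · refine Finset.mem_image.2 ⟨r * σ r, ?_, ?_⟩
    · rwa [Multiset.mem_toFinset, mem_nthRoots (Nat.pos_of_ne_zero hn)]
    · rw [map_mul]
      ring

theorem at_most_2t2_solutions_general (σ : R →+* R) {m n : ℕ} (hm : m ≠ 0) (hn : n ≠ 0)
    {S T : Set R} (hS : ∀ r ∈ S, (r * σ r) ^ m = 1) (hT : ∀ s ∈ T, (s * σ s) ^ n = 1)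
    {α β : R} (hα : α ≠ 0) (hβ : β ≠ 0) :
    {p : R × R | p.1 ∈ S ∧ p.2 ∈ T ∧ α * p.1 + β * p.2 = 1}.encard ≤ (2 * (m * n) : ℕ) := by
  obtain ⟨A, hAm, hA⟩ := exists_finset_mul_map_mem σ α hm
  obtain ⟨B, hBn, hB⟩ := exists_finset_mul_map_mem σ β hn
  have hmaps : Set.MapsTo (fun p : R × R ↦ α * p.1)
      {p | p.1 ∈ S ∧ p.2 ∈ T ∧ α * p.1 + β * p.2 = 1}
      {z | z * σ z ∈ A ∧ (1 - z) * σ (1 - z) ∈ B} := by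
    rintro ⟨r, s⟩ ⟨hr, hs, h⟩
    refine ⟨hA r (hS r hr), ?_⟩
    rw [← eq_sub_of_add_eq' h]
    exact hB s (hT s hs)
  calc _ ≤ _ := Set.encard_le_encard_of_injOn hmaps <|
        (injOn_mul_fst_of_linear_eq hα hβ 1).mono fun _ hp ↦ hp.2.2
    _ ≤ (2 * (A.card * B.card) : ℕ) := encard_setOf_mul_map_mem_le σ A B
    _ ≤ _ := by gcongr

end Domain

theorem exists_ringHom_eq_pow_of_card_eq_pow {F : Type*} [Field F] [Fintype F] {q n : ℕ}
    (hn : n ≠ 0) (hF : Fintype.card F = q ^ n) : ∃ σ : F →+* F, ∀ x, σ x = x ^ q := by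
  obtain ⟨p, _⟩ := CharP.exists F
  obtain ⟨k, hp, hk⟩ := FiniteField.card F p
  have : Fact p.Prime := ⟨hp⟩
  obtain ⟨j, -, rfl⟩ : ∃ j ≤ (k : ℕ), q = p ^ j :=
    (Nat.dvd_prime_pow hp).1 (hk ▸ hF ▸ dvd_pow_self q hn)
  exact ⟨iterateFrobenius F p j, iterateFrobenius_def p j⟩

theorem val_mul_pow_pow_eq_one_of_mem {M : Type*} [Monoid M] {H : Subgroup Mˣ} {q t : ℕ}
    (hH : Nat.card H = t * (q + 1)) {h : Mˣ} (hh : h ∈ H) : ((h : M) * (h : M) ^ q) ^ t = 1 := by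
  rw [← pow_succ', ← pow_mul, mul_comm, ← hH]
  exact_mod_cast orderOf_dvd_iff_pow_eq_one.1 (H.orderOf_dvd_natCard hh)

/-- Let `q` be a prime power, `t ∣ q−1`, `F` a field with `q²` elements and `H` the unique
subgroup of `Fˣ` of order `t(q+1)`. For nonzero `α, β ∈ F`, the number of pairs `(r,s)`
with `r, s ∈ H` and `α·r + β·s = 1` is at most `2t²`. -/
theorem at_most_2t2_solutions {q t : ℕ} (hq : IsPrimePow q) (ht : t ∣ q - 1)
    {F : Type} [Field F] [Fintype F] (hF : Fintype.card F = q ^ 2)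
    (H : Subgroup Fˣ) (hH : Nat.card H = t * (q + 1))
    (α β : F) (hα : α ≠ 0) (hβ : β ≠ 0) :
    {p : F × F | (∃ h ∈ H, (h : F) = p.1) ∧ (∃ h ∈ H, (h : F) = p.2) ∧
      α * p.1 + β * p.2 = 1}.ncard ≤ 2 * t ^ 2 := by
  obtain ⟨σ, hσ⟩ := exists_ringHom_eq_pow_of_card_eq_pow two_ne_zero hF
  have ht0 : t ≠ 0 := left_ne_zero_of_mul (hH ▸ Nat.card_pos.ne')
  have hnorm : ∀ r ∈ ((↑) : Fˣ → F) '' H, (r * σ r) ^ t = 1 := by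
    rintro _ ⟨h, hh, rfl⟩
    rw [hσ, val_mul_pow_pow_eq_one_of_mem hH hh]
  rw [sq]
  exact (Set.encard_le_coe_iff_finite_ncard_le.1 <|
    at_most_2t2_solutions_general σ ht0 ht0 hnorm hnorm hα hβ).2
end

section
/- Let q be a prime power, r ≥ 1 an integer, F a finite field with q^r elements, and N : F → F the map x ↦ x^{1+q+⋯+q^{r−1}} (the norm of F over its subfield with q elements). Let c₁,…,c_r, d₁,…,d_r ∈ F with d_i ≠ d_j for all i ≠ j. Then the system of equations N(x+d₁)=c₁, N(x+d₂)=c₂, …, N(x+d_r)=c_r has at most r! solutions x ∈ F. -/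
/-!
Put `q = pᵏ` with `p` the characteristic exponent. Since `x ↦ x ^ qⁱ` is additive, every solution
`x` gives the solution `yᵢ = x ^ qⁱ` of the system `∏ᵢ (yᵢ - aᵢⱼ) = cⱼ`, where `aᵢⱼ = -dⱼ ^ qⁱ`, and
the entries of each row `aᵢ` are distinct.

So consider the map `K^ι → K^ι` with components `fⱼ = ∏ᵢ (Xᵢ - aᵢⱼ)`. It is finite: if a valuation
ring contains `K` and all `fⱼ`, then for each `i` at most one of the `Xᵢ - aᵢⱼ` has valuation less
than `1`, and none if `Xᵢ` has a pole; so a pole would leave some `j` all of whose factors have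
valuation at least `1`, making `fⱼ` a pole too. The fibre over `0` consists of the points
`(aᵢ,σ₍ᵢ₎)ᵢ`, for `σ` a permutation, each of them reduced, so by Nakayama's lemma `K[X]` has rank at
most `|ι|!` over `K[f]`. As `K[f]` is integrally closed, the minimal polynomial of any
`b ∈ K[X]` has coefficients in `K[f]` and degree at most `|ι|!`; specialised at `c`, it vanishes at
all values of `b` on the fibre over `c`. Taking `b = X₀` recovers `x`.
-/

open MvPolynomial Module

section FiniteExtensions

variable {A B : Type*} [CommRing A] [IsDomain A] [CommRing B] [Algebra A B]

lemma finrank_le_card_of_top_le_span_sup_smul_top {M σ : Type*} [AddCommGroup M] [Module A M]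
    [IsTorsionFree A M] [Module.Finite A M] [Fintype σ] {m : Ideal A} (hm : m ≠ ⊤) (e : σ → M)
    (h : ⊤ ≤ Submodule.span A (Set.range e) ⊔ m • (⊤ : Submodule A M)) :
    finrank A M ≤ Fintype.card σ := by
  obtain ⟨s, hs_one, hs⟩ :=
    Submodule.exists_sub_one_mem_and_smul_le_of_fg_of_le_sup Module.Finite.fg_top le_rfl h
  have hs_ne : s ≠ 0 := by
    rintro rfl
    exact hm ((Ideal.eq_top_iff_one m).2 (by simpa using hs_one))
  have : Module.Finite A (Submodule.span A (Set.range e)) := .span_of_finite A (Set.finite_range e)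
  let smulHom : M →ₗ[A] Submodule.span A (Set.range e) :=
    (LinearMap.lsmul A M s).codRestrict _ fun x ↦
      hs (Submodule.smul_mem_pointwise_smul x s ⊤ trivial)
  have smulHom_injective : Function.Injective smulHom := fun x y hxy ↦
    smul_right_injective M hs_ne (congrArg Subtype.val hxy)
  exact (LinearMap.finrank_le_finrank_of_injective smulHom_injective).trans
    (finrank_range_le_card e)

variable [IsIntegrallyClosed A] [IsDomain B] [IsTorsionFree A B] [Module.Finite A B]

lemma natDegree_minpoly_le_finrank (b : B) : (minpoly A b).natDegree ≤ finrank A B := by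
  have hb : IsIntegral A b := Algebra.IsIntegral.isIntegral b
  let _ := FractionRing.liftAlgebra A (FractionRing B)
  rw [← (minpoly.monic hb).natDegree_map (algebraMap A (FractionRing A)),
    ← minpoly.isIntegrallyClosed_eq_field_fractions (FractionRing A) (FractionRing B) hb,
    ← IsFractionRing.finrank_eq A (FractionRing A) B (FractionRing B)]
  exact minpoly.natDegree_le _

lemma encard_values_of_extensions_le_finrank {K : Type*} [CommRing K] [IsDomain K] (φ : A →+* K)
    (b : B) :
    ((fun ψ : B →+* K ↦ ψ b) '' {ψ | ψ.comp (algebraMap A B) = φ}).encard ≤ finrank A B := by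
  classical
  let P := (minpoly A b).map φ
  have hP : P ≠ 0 := ((minpoly.monic (Algebra.IsIntegral.isIntegral b)).map φ).ne_zero
  have hroots : (fun ψ : B →+* K ↦ ψ b) '' {ψ | ψ.comp (algebraMap A B) = φ} ⊆
      P.roots.toFinset := by
    rintro _ ⟨ψ, rfl, rfl⟩
    rw [Finset.mem_coe, Multiset.mem_toFinset, Polynomial.mem_roots hP, Polynomial.IsRoot.def,
      Polynomial.eval_map, ← Polynomial.hom_eval₂, ← Polynomial.aeval_def, minpoly.aeval, map_zero]
  calc _ ≤ (P.roots.toFinset : Set K).encard := Set.encard_le_encard hroots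
    _ = P.roots.toFinset.card := Set.encard_coe_eq_coe_finsetCard _
    _ ≤ finrank A B := by
      exact_mod_cast P.roots.toFinset_card_le.trans <| P.card_roots'.trans <|
        Polynomial.natDegree_map_le.trans (natDegree_minpoly_le_finrank b)

end FiniteExtensions

section PolynomialRings

variable {ι R : Type*} [CommRing R]

lemma sub_C_eval_mem {I : Ideal (MvPolynomial ι R)} {y : ι → R} (h : ∀ i, X i - C (y i) ∈ I)
    (p : MvPolynomial ι R) : p - C (eval y p) ∈ I := by
  have hmk : (Ideal.Quotient.mk I).comp (C.comp (eval y)) = Ideal.Quotient.mk I :=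
    ringHom_ext (by simp) fun i ↦ by
      simpa using (Ideal.Quotient.mk_eq_mk_iff_sub_mem _ _).2 (h i) |>.symm
  exact (Ideal.Quotient.mk_eq_mk_iff_sub_mem _ _).1 (congrArg (· p) hmk).symm

lemma finite_of_isIntegral_X [Finite ι] {A : Subalgebra R (MvPolynomial ι R)}
    (hA : ∀ i, IsIntegral A (X i : MvPolynomial ι R)) : Module.Finite A (MvPolynomial ι R) := by
  have hle : Algebra.adjoin R (Set.range X) ≤
      (integralClosure A (MvPolynomial ι R)).restrictScalars R :=
    Algebra.adjoin_le (Set.range_subset_iff.2 hA)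
  rw [adjoin_range_X] at hle
  have : Algebra.IsIntegral A (MvPolynomial ι R) := ⟨fun p ↦ hle (Algebra.mem_top (x := p))⟩
  have : Algebra.FiniteType A (MvPolynomial ι R) := .of_restrictScalars_finiteType R A _
  exact Algebra.IsIntegral.finite

lemma isIntegrallyClosed_adjoin_range [IsDomain R] [UniqueFactorizationMonoid R] {S : Type*}
    [CommRing S] [Algebra R S] {f : ι → S} (hf : AlgebraicIndependent R f) :
    IsIntegrallyClosed (Algebra.adjoin R (Set.range f)) :=
  .of_equiv hf.aevalEquiv.toRingEquiv

lemma algebraicIndependent_of_isAlgebraic_adjoin [IsDomain R] [Finite ι]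
    (f : ι → MvPolynomial ι R)
    [Algebra.IsAlgebraic (Algebra.adjoin R (Set.range f)) (MvPolynomial ι R)] :
    AlgebraicIndependent R f :=
  (Algebra.IsAlgebraic.isTranscendenceBasis_of_lift_le_trdeg_of_finite R f
    (by rw [MvPolynomial.trdeg_of_isDomain]; simp)).1

end PolynomialRings

section Integrality

lemma isIntegral_of_forall_mem_valuationSubring {A L : Type*} [CommRing A] [Field L] [Algebra A L]
    {x : L} (hx : ∀ V : ValuationSubring L, (∀ a, algebraMap A L a ∈ V) → x ∈ V) :
    IsIntegral A x := by
  have : IsIntegrallyClosedIn (integralClosure A L).toSubring L :=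
    inferInstanceAs (IsIntegrallyClosedIn (integralClosure A L) L)
  by_contra hnot
  obtain ⟨V, hle, hxV⟩ := Subring.exists_le_valuationSubring_of_isIntegrallyClosedIn
    (R := (integralClosure A L).toSubring) hnot
  exact hxV (hx V fun a ↦ hle ((integralClosure A L).algebraMap_mem a))

variable {K L : Type*} [Field K] [Field L] [Algebra K L]

lemma one_lt_valuation_sub_algebraMap {V : ValuationSubring L} (hV : ∀ k, algebraMap K L k ∈ V)
    {x : L} (hx : x ∉ V) (b : K) : 1 < V.valuation (x - algebraMap K L b) := by
  rw [← not_le, V.valuation_le_one_iff]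
  exact fun hmem ↦ hx (by simpa using V.add_mem _ _ hmem (hV b))

lemma eq_of_valuation_sub_algebraMap_lt_one {V : ValuationSubring L}
    (hV : ∀ k, algebraMap K L k ∈ V) {x : L} {b b' : K}
    (hb : V.valuation (x - algebraMap K L b) < 1) (hb' : V.valuation (x - algebraMap K L b') < 1) :
    b = b' := by
  by_contra hne
  have hlt : V.valuation (algebraMap K L (b - b')) < 1 := by
    simpa using V.valuation.map_sub_lt hb' hb
  have hge : 1 ≤ V.valuation (algebraMap K L (b - b')) := by
    have hinv := (V.valuation_le_one_iff _).2 (hV (b - b')⁻¹)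
    rw [map_inv₀, map_inv₀] at hinv
    exact (inv_le_one₀ (by simpa [zero_lt_iff, sub_eq_zero, -map_sub] using hne)).1 hinv
  exact hge.not_gt hlt

variable {ι κ : Type*} [Fintype ι] [Fintype κ] {a : ι → κ → K}

lemma mem_valuationSubring_of_prod_sub_mem (hcard : Fintype.card ι ≤ Fintype.card κ)
    (ha : ∀ i, Function.Injective (a i)) {V : ValuationSubring L}
    (hV : ∀ k, algebraMap K L k ∈ V) {x : ι → L}
    (hx : ∀ j, ∏ i, (x i - algebraMap K L (a i j)) ∈ V) (i : ι) : x i ∈ V := by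
  classical
  by_contra hi
  have exists_forall_one_le :
      ∃ j, ∀ i', 1 ≤ V.valuation (x i' - algebraMap K L (a i' j)) := by
    by_contra! h
    choose τ hτ using h
    have τ_injective : Function.Injective τ := fun j j' h ↦
      ha (τ j) (eq_of_valuation_sub_algebraMap_lt_one hV (hτ j) (h ▸ hτ j'))
    have hi_range : i ∉ Set.range τ := by
      rintro ⟨j, rfl⟩
      exact (one_lt_valuation_sub_algebraMap hV hi _).not_gt (hτ j)
    exact (Fintype.card_lt_of_injective_of_notMem τ τ_injective hi_range).not_ge hcard
  obtain ⟨j, hj⟩ := exists_forall_one_le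
  have hprod : 1 < V.valuation (∏ i', (x i' - algebraMap K L (a i' j))) := by
    rw [map_prod, ← Finset.mul_prod_erase _ _ (Finset.mem_univ i)]
    exact (one_lt_valuation_sub_algebraMap hV hi _).trans_le
      (le_mul_of_one_le_right' (Finset.one_le_prod' fun i' _ ↦ hj i'))
  exact hprod.not_ge ((V.valuation_le_one_iff _).2 (hx j))

lemma isIntegral_of_prod_sub_mem (hcard : Fintype.card ι ≤ Fintype.card κ)
    (ha : ∀ i, Function.Injective (a i)) {S : Type*} [CommRing S] [IsDomain S] [Algebra K S]
    {A : Subalgebra K S} {x : ι → S} (hx : ∀ j, ∏ i, (x i - algebraMap K S (a i j)) ∈ A) (i : ι) :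
    IsIntegral A (x i) := by
  let L := FractionRing S
  refine (isIntegral_algebraMap_iff (IsFractionRing.injective S L)).1
    (isIntegral_of_forall_mem_valuationSubring fun V hV ↦ ?_)
  refine mem_valuationSubring_of_prod_sub_mem hcard ha (x := fun i ↦ algebraMap S L (x i))
    (fun k ↦ ?_) (fun j ↦ ?_) i
  · exact hV (algebraMap K A k)
  · simpa [← IsScalarTower.algebraMap_apply, Subalgebra.algebraMap_def] using hV ⟨_, hx j⟩

end Integrality

section CoordProd

variable {ι κ K : Type*} [Fintype ι] [Field K]

/-- The polynomials `fⱼ = ∏ᵢ (Xᵢ - aᵢⱼ)`, regarded as the components of a polynomial map. -/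
noncomputable def coordProd (a : ι → κ → K) (j : κ) : MvPolynomial ι K := ∏ i, (X i - C (a i j))

/-- The subalgebra `K[f]` generated by the components of the map `coordProd a`. -/
noncomputable def coordProdAlgebra (a : ι → κ → K) : Subalgebra K (MvPolynomial ι K) :=
  Algebra.adjoin K (Set.range (coordProd a))

lemma coordProd_mem (a : ι → κ → K) (j : κ) : coordProd a j ∈ coordProdAlgebra a :=
  Algebra.subset_adjoin ⟨j, rfl⟩

@[simp]
lemma eval_coordProd (a : ι → κ → K) (j : κ) (y : ι → K) :
    eval y (coordProd a j) = ∏ i, (y i - a i j) := by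
  simp [coordProd]

end CoordProd

section FiberIndicator

variable {ι K : Type*} [Fintype ι] [DecidableEq ι] [Field K] {a : ι → ι → K}

/-- The product of all `Xᵢ - aᵢⱼ` with `j ≠ σ i`. Over the fibre `f = 0` of `coordProd a` it is
supported at the point `(aᵢ,σ₍ᵢ₎)ᵢ`. -/
noncomputable def fiberIndicator (a : ι → ι → K) (σ : Equiv.Perm ι) : MvPolynomial ι K :=
  ∏ i, ∏ j ∈ Finset.univ.erase (σ i), (X i - C (a i j))

lemma coordProd_dvd_sub_mul_fiberIndicator (a : ι → ι → K) (σ : Equiv.Perm ι) (i : ι) :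
    coordProd a (σ i) ∣ (X i - C (a i (σ i))) * fiberIndicator a σ := by
  rw [coordProd, fiberIndicator, ← Finset.mul_prod_erase _ _ (Finset.mem_univ i),
    ← Finset.mul_prod_erase Finset.univ (fun i ↦ ∏ j ∈ _, _) (Finset.mem_univ i)]
  refine mul_dvd_mul_left _ (Dvd.dvd.mul_left (Finset.prod_dvd_prod_of_dvd _ _ fun k hk ↦ ?_) _)
  have hσ : σ i ∈ Finset.univ.erase (σ k) := by
    simpa using (Finset.ne_of_mem_erase hk).symm
  exact Finset.dvd_prod_of_mem (fun j ↦ X k - C (a k j)) hσ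

lemma sub_C_eval_mul_fiberIndicator_mem {I : Ideal (MvPolynomial ι K)}
    (hI : ∀ j, coordProd a j ∈ I) (σ : Equiv.Perm ι) (p : MvPolynomial ι K) :
    (p - C (eval (fun i ↦ a i (σ i)) p)) * fiberIndicator a σ ∈ I := by
  have hcolon (i : ι) : X i - C (a i (σ i)) ∈ I.colon {fiberIndicator a σ} := by
    rw [Submodule.mem_colon_singleton]
    exact I.mem_of_dvd (coordProd_dvd_sub_mul_fiberIndicator a σ i) (hI (σ i))
  exact Submodule.mem_colon_singleton.1 (sub_C_eval_mem hcolon p)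

lemma span_fiberIndicator_sup_eq_top (ha : ∀ i, Function.Injective (a i))
    {I : Ideal (MvPolynomial ι K)} (hI : ∀ j, coordProd a j ∈ I) :
    Ideal.span (Set.range (fiberIndicator a)) ⊔ I = ⊤ := by
  by_contra hne
  obtain ⟨M, hM, hle⟩ := Ideal.exists_le_maximal _ hne
  have eq_of_mem {i j j' : ι} (h : X i - C (a i j) ∈ M) (h' : X i - C (a i j') ∈ M) : j = j' := by
    by_contra hjj'
    have hC : C (a i j - a i j') ∈ M := by simpa using M.sub_mem h' h
    exact hM.ne_top (M.eq_top_of_isUnit_mem hC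
      ((sub_ne_zero.2 ((ha i).ne hjj')).isUnit.map C))
  have exists_mem (j : ι) : ∃ i, X i - C (a i j) ∈ M := by
    simpa [coordProd, hM.isPrime.prod_mem_iff] using hle (Ideal.mem_sup_right (hI j))
  choose τ hτ using exists_mem
  have τ_injective : Function.Injective τ := fun j j' h ↦ eq_of_mem (hτ j) (h ▸ hτ j')
  let σ := (Equiv.ofBijective τ (Finite.injective_iff_bijective.1 τ_injective)).symm
  have hσ (i : ι) : X i - C (a i (σ i)) ∈ M := by
    have hτσ : τ (σ i) = i := Equiv.ofBijective_apply_symm_apply τ _ i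
    simpa only [hτσ] using hτ (σ i)
  have hmem : fiberIndicator a σ ∈ M := hle (Ideal.mem_sup_left (Ideal.subset_span ⟨σ, rfl⟩))
  simp only [fiberIndicator, hM.isPrime.prod_mem_iff] at hmem
  obtain ⟨i, -, j, hj, hij⟩ := hmem
  exact Finset.ne_of_mem_erase hj (eq_of_mem hij (hσ i))

lemma top_le_span_fiberIndicator_sup_smul_top (ha : ∀ i, Function.Injective (a i))
    {m : Ideal (coordProdAlgebra a)} (hm : ∀ j, ⟨coordProd a j, coordProd_mem a j⟩ ∈ m) :
    ⊤ ≤ Submodule.span (coordProdAlgebra a) (Set.range (fiberIndicator a)) ⊔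
      m • (⊤ : Submodule (coordProdAlgebra a) (MvPolynomial ι K)) := by
  set N := Submodule.span (coordProdAlgebra a) (Set.range (fiberIndicator a))
  let I := m.map (algebraMap (coordProdAlgebra a) (MvPolynomial ι K))
  have hI (j : ι) : coordProd a j ∈ I := Ideal.mem_map_of_mem (algebraMap _ _) (hm j)
  rw [Ideal.smul_top_eq_map]
  intro p _
  obtain ⟨u, hu, v, hv, rfl⟩ :=
    Submodule.mem_sup.1 ((span_fiberIndicator_sup_eq_top ha hI).ge (Submodule.mem_top (x := p)))
  refine add_mem ?_ (Submodule.mem_sup_right hv)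
  obtain ⟨g, rfl⟩ := Ideal.mem_span_range_iff_exists_fun.1 hu
  refine sum_mem fun σ _ ↦ ?_
  have hscalar : C (eval (fun i ↦ a i (σ i)) (g σ)) * fiberIndicator a σ ∈ N :=
    N.smul_mem (algebraMap K (coordProdAlgebra a) _) (Submodule.subset_span ⟨σ, rfl⟩)
  have hdiff : _ ∈ I.restrictScalars (coordProdAlgebra a) :=
    sub_C_eval_mul_fiberIndicator_mem hI σ (g σ)
  simpa [sub_mul] using Submodule.add_mem_sup hscalar hdiff

end FiberIndicator

section CoordProdAlgebra

variable {ι K : Type*} [Fintype ι] [Field K] {a : ι → ι → K}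

lemma finite_coordProdAlgebra (ha : ∀ i, Function.Injective (a i)) :
    Module.Finite (coordProdAlgebra a) (MvPolynomial ι K) :=
  finite_of_isIntegral_X (isIntegral_of_prod_sub_mem le_rfl ha (coordProd_mem a))

lemma isIntegrallyClosed_coordProdAlgebra (ha : ∀ i, Function.Injective (a i)) :
    IsIntegrallyClosed (coordProdAlgebra a) := by
  have := finite_coordProdAlgebra ha
  have : Algebra.IsAlgebraic (Algebra.adjoin K (Set.range (coordProd a))) (MvPolynomial ι K) :=
    inferInstanceAs (Algebra.IsAlgebraic (coordProdAlgebra a) (MvPolynomial ι K))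
  exact isIntegrallyClosed_adjoin_range (algebraicIndependent_of_isAlgebraic_adjoin (coordProd a))

lemma finrank_coordProdAlgebra_le (ha : ∀ i, Function.Injective (a i)) :
    finrank (coordProdAlgebra a) (MvPolynomial ι K) ≤ (Fintype.card ι).factorial := by
  classical
  have := finite_coordProdAlgebra ha
  let evalDiagonal := (eval fun i ↦ a i i).comp
    (algebraMap (coordProdAlgebra a) (MvPolynomial ι K))
  have hm (j : ι) : ⟨coordProd a j, coordProd_mem a j⟩ ∈ RingHom.ker evalDiagonal := by
    change eval _ (coordProd a j) = 0
    rw [eval_coordProd]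
    exact Finset.prod_eq_zero (Finset.mem_univ j) (sub_self _)
  rw [← Fintype.card_perm]
  exact finrank_le_card_of_top_le_span_sup_smul_top (RingHom.ker_ne_top evalDiagonal) _
    (top_le_span_fiberIndicator_sup_smul_top ha hm)

lemma encard_image_eval_prod_sub_eq_le (ha : ∀ i, Function.Injective (a i)) (c : ι → K)
    (p : MvPolynomial ι K) :
    ((fun y ↦ eval y p) '' {y | ∀ j, ∏ i, (y i - a i j) = c j}).encard ≤
      (Fintype.card ι).factorial := by
  have := finite_coordProdAlgebra ha
  have := isIntegrallyClosed_coordProdAlgebra ha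
  let restrictEval (y : ι → K) : coordProdAlgebra a →ₐ[K] K :=
    (aeval y).comp (coordProdAlgebra a).val
  obtain hempty | ⟨y₀, hy₀⟩ :=
    {y : ι → K | ∀ j, ∏ i, (y i - a i j) = c j}.eq_empty_or_nonempty
  · simp [hempty]
  have restrictEval_eq {y : ι → K} (hy : ∀ j, ∏ i, (y i - a i j) = c j) :
      restrictEval y = restrictEval y₀ := by
    refine AlgHom.adjoin_ext ?_
    rintro _ ⟨j, rfl⟩
    change eval y (coordProd a j) = eval y₀ (coordProd a j)
    rw [eval_coordProd, eval_coordProd, hy, hy₀]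
  calc _ ≤ ((fun ψ : MvPolynomial ι K →+* K ↦ ψ p) ''
        {ψ | ψ.comp (algebraMap (coordProdAlgebra a) _) = restrictEval y₀}).encard := by
        refine Set.encard_le_encard (Set.image_subset_iff.2 fun y hy ↦ ⟨eval y, ?_, rfl⟩)
        exact congrArg AlgHom.toRingHom (restrictEval_eq hy)
    _ ≤ finrank (coordProdAlgebra a) (MvPolynomial ι K) :=
      encard_values_of_extensions_le_finrank _ p
    _ ≤ (Fintype.card ι).factorial := by exact_mod_cast finrank_coordProdAlgebra_le ha

end CoordProdAlgebra

lemma prod_pow_sub_eq_add_pow_sum {R : Type*} [CommRing R] (p k : ℕ) [ExpChar R p] (r : ℕ)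
    (x d : R) :
    ∏ i : Fin r, (x ^ (p ^ k) ^ (i : ℕ) - -d ^ (p ^ k) ^ (i : ℕ)) =
      (x + d) ^ ∑ i ∈ Finset.range r, (p ^ k) ^ i := by
  simp only [sub_neg_eq_add, ← pow_mul p, ← add_pow_expChar_pow]
  rw [Fin.prod_univ_eq_prod_range fun i ↦ (x + d) ^ p ^ (k * i), Finset.prod_pow_eq_pow_sum]

theorem norm_system_solutions_general {p k r : ℕ} (hr : 1 ≤ r) {F : Type*} [Field F] [ExpChar F p]
    (c d : Fin r → F) (hd : Function.Injective d) :
    {x : F | ∀ i : Fin r,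
      (x + d i) ^ (∑ j ∈ Finset.range r, (p ^ k) ^ j) = c i}.encard ≤ r.factorial := by
  let a (i j : Fin r) : F := -d j ^ (p ^ k) ^ (i : ℕ)
  have ha (i : Fin r) : Function.Injective (a i) := by
    refine neg_injective.comp (.comp (g := (· ^ (p ^ k) ^ (i : ℕ))) ?_ hd)
    simpa only [Function.Injective, iterateFrobenius_def, ← pow_mul] using
      iterateFrobenius_inj F p (k * i)
  have hbound := encard_image_eval_prod_sub_eq_le ha c (X ⟨0, hr⟩)
  rw [Fintype.card_fin] at hbound
  refine (Set.encard_le_encard fun x hx ↦ ?_).trans hbound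
  refine ⟨fun i ↦ x ^ (p ^ k) ^ (i : ℕ), fun j ↦ ?_, by simp⟩
  exact (prod_pow_sub_eq_add_pow_sum p k r x (d j)).trans (hx j)

lemma exists_expChar_pow_of_card_eq_pow {q r : ℕ} (hq : IsPrimePow q) {F : Type*} [CommRing F]
    [IsDomain F] [Fintype F] (hF : Fintype.card F = q ^ r) : ∃ p k, ExpChar F p ∧ q = p ^ k := by
  obtain ⟨p, k, hp, -, rfl⟩ := hq
  have : Fact p.Prime := ⟨hp.nat_prime⟩
  have : CharP F p := charP_of_card_eq_prime_pow (hF.trans (pow_mul p k r).symm)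
  exact ⟨p, k, .prime hp.nat_prime, rfl⟩

/-- Let `F` be a field with `q^r` elements and `N : F → F`, `N x = x^{1+q+⋯+q^{r−1}}`, the
norm map of `F` over its subfield with `q` elements. If `d₁, …, d_r ∈ F` are pairwise
distinct and `c₁, …, c_r ∈ F`, then the system `N(x + dᵢ) = cᵢ`, `i = 1, …, r`, has at
most `r!` solutions `x ∈ F`. -/
theorem norm_system_solutions {q r : ℕ} (hq : IsPrimePow q) (hr : 1 ≤ r)
    {F : Type} [Field F] [Fintype F] (hF : Fintype.card F = q ^ r)
    (c d : Fin r → F) (hd : Function.Injective d) :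
    {x : F | ∀ i : Fin r,
      (x + d i) ^ (∑ j ∈ Finset.range r, q ^ j) = c i}.ncard ≤ r.factorial := by
  obtain ⟨p, k, _, rfl⟩ := exists_expChar_pow_of_card_eq_pow hq hF
  exact ENat.toNat_le_of_le_natCast (norm_system_solutions_general hr c d hd)
end
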